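/- Let N ≥ 1 and Λ > 1. Let (u, v) be a classical solution of the system (P_Λ) with u ≥ 0 and v ≥ 0 on ℝ^N, satisfying condition (h∞). Then there exists δ > 0 such that for every unit vector ν ∈ ℝ^N with |ν − e_N| < δ, the directional derivatives satisfy ∂_ν u > 0 and ∂_ν v < 0 at every point of ℝ^N (i.e. u is strictly increasing and v strictly decreasing with respect to all unit vectors in an open neighborhood of e_N in the unit sphere). -/

import Mathlib

/-!
The conclusion holds for every direction `ν` whose last coordinate is positive, so `δ = 1` works.
The proof is a sliding argument in which all elliptic estimates are replaced by explicit barriers.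

*Preliminaries.* A Keller–Osserman barrier gives `u, v ≤ 1` (`le_one_of_lap_ge`), a reflection
barrier gives Lipschitz bounds (`lipschitz_of_lap_bound`), and the Hopf barrier gives a quantitative
strong maximum principle (`hopf_propagation`) which makes compactness arguments along translations
unnecessary.

*Sliding.* For a shift `a` with `a_N > 0` put `w = u(· + a) - u` and `z = v - v(· + a)`. They solve a
linear system which is cooperative where `w, z ≥ 0`, and which is diagonally dominant with positive
diagonal near both limit states because `Λ > 1`. Hence `w, z ≥ 0` everywhere as soon as this holds
on the set of `x` with `x` not far up and `x + a` not far down (`Front.exists_comparison`). There it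
holds for large shifts, since `u`, `1 - u`, `v`, `1 - v` are bounded below on suitable half spaces
(`Front.exists_ordered_of_large`). The set of `t > 0` for which the shift `t a` is ordered is closed;
it is also open, because on strips `w` and `z` are bounded below by a positive constant: along
`x + k a` the function `u` climbs from near `0` to near `1` in boundedly many steps, so one step is
large, and `hopf_propagation` carries this back to `x` (`Front.exists_pos_le_diff_u`). So every
`t > 0` is admissible (`Front.ordered_of_pos`).

*Strictness.* `∂_ν u` is positive somewhere by the limits; `hopf_propagation` applied to the
difference quotients of `u`, uniformly in the step, makes it positive everywhere
(`Front.fderiv_u_pos`). The statements for `v` follow from the symmetry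
`(u, v) ↦ (v(-·), u(-·))` of the problem (`Front.symm`).
-/

open scoped RealInnerProductSpace
open Filter

noncomputable section

/-- The Laplacian of `f : ℝ^N → ℝ`, as the sum of the pure second partial
derivatives in the coordinate directions. -/
def lap (N : ℕ) (f : EuclideanSpace ℝ (Fin N) → ℝ) (x : EuclideanSpace ℝ (Fin N)) : ℝ :=
  ∑ i : Fin N,
    fderiv ℝ (fun y => fderiv ℝ f y (EuclideanSpace.single i 1)) x (EuclideanSpace.single i 1)

/-- `(u, v)` is a classical solution of the system `(P_Λ)` on `ℝ^N`:
`u, v` are `C²` and `-Δu = u - u³ - Λ u v²`, `-Δv = v - v³ - Λ u² v` pointwise. -/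
def IsSolution (N : ℕ) (Λ : ℝ) (u v : EuclideanSpace ℝ (Fin N) → ℝ) : Prop :=
  ContDiff ℝ 2 u ∧ ContDiff ℝ 2 v ∧
  (∀ x, -lap N u x = u x - (u x) ^ 3 - Λ * u x * (v x) ^ 2) ∧
  (∀ x, -lap N v x = v x - (v x) ^ 3 - Λ * (u x) ^ 2 * v x)

/-- Condition `(h∞)`: `u → 1`, `v → 0` as `x_N → +∞` and `u → 0`, `v → 1` as
`x_N → -∞`, uniformly with respect to `x' ∈ ℝ^{N-1}` (the dimension is `N + 1`). -/
def Hinf (N : ℕ) (u v : EuclideanSpace ℝ (Fin (N + 1)) → ℝ) : Prop :=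
  (∀ ε : ℝ, 0 < ε → ∃ M : ℝ, ∀ x : EuclideanSpace ℝ (Fin (N + 1)),
    M ≤ x (Fin.last N) → |u x - 1| < ε ∧ |v x| < ε) ∧
  (∀ ε : ℝ, 0 < ε → ∃ M : ℝ, ∀ x : EuclideanSpace ℝ (Fin (N + 1)),
    x (Fin.last N) ≤ M → |u x| < ε ∧ |v x - 1| < ε)

open Topology

/-! ### The Laplacian: calculus rules and explicit values -/

theorem differentiableAt_fderiv_apply {n : ℕ} {f : EuclideanSpace ℝ (Fin n) → ℝ}
    {x : EuclideanSpace ℝ (Fin n)} (hf : ContDiffAt ℝ 2 f x) (e : EuclideanSpace ℝ (Fin n)) :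
    DifferentiableAt ℝ (fun y => fderiv ℝ f y e) x := by
  have h1 : ContDiffAt ℝ 1 (fderiv ℝ f) x := hf.fderiv_right (by norm_num)
  exact (h1.differentiableAt (by norm_num)).clm_apply (differentiableAt_const e)

theorem eventually_differentiableAt {n : ℕ} {f : EuclideanSpace ℝ (Fin n) → ℝ}
    {x : EuclideanSpace ℝ (Fin n)} (hf : ContDiffAt ℝ 2 f x) :
    ∀ᶠ y in 𝓝 x, DifferentiableAt ℝ f y := by
  filter_upwards [hf.eventually (by simp)] with y hy
  exact hy.differentiableAt (by norm_num)

theorem lap_sub {n : ℕ} {f g : EuclideanSpace ℝ (Fin n) → ℝ} {x : EuclideanSpace ℝ (Fin n)}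
    (hf : ContDiffAt ℝ 2 f x) (hg : ContDiffAt ℝ 2 g x) :
    lap n (fun y => f y - g y) x = lap n f x - lap n g x := by
  unfold lap
  rw [← Finset.sum_sub_distrib]
  refine Finset.sum_congr rfl fun i _ => ?_
  have h : (fun y => fderiv ℝ (fun y => f y - g y) y (EuclideanSpace.single i 1)) =ᶠ[𝓝 x]
      fun y => fderiv ℝ f y (EuclideanSpace.single i 1)
        - fderiv ℝ g y (EuclideanSpace.single i 1) := by
    filter_upwards [eventually_differentiableAt hf, eventually_differentiableAt hg] with y h1 h2
    rw [fderiv_fun_sub h1 h2]; rfl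
  rw [h.fderiv_eq, fderiv_fun_sub (differentiableAt_fderiv_apply hf _)
    (differentiableAt_fderiv_apply hg _)]
  rfl

theorem lap_const_mul {n : ℕ} {f : EuclideanSpace ℝ (Fin n) → ℝ} {x : EuclideanSpace ℝ (Fin n)}
    (hf : ContDiffAt ℝ 2 f x) (c : ℝ) :
    lap n (fun y => c * f y) x = c * lap n f x := by
  unfold lap
  rw [Finset.mul_sum]
  refine Finset.sum_congr rfl fun i _ => ?_
  have h : (fun y => fderiv ℝ (fun y => c * f y) y (EuclideanSpace.single i 1)) =ᶠ[𝓝 x]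
      fun y => c * fderiv ℝ f y (EuclideanSpace.single i 1) := by
    filter_upwards [eventually_differentiableAt hf] with y h1
    rw [fderiv_const_mul h1]; rfl
  rw [h.fderiv_eq, fderiv_const_mul (differentiableAt_fderiv_apply hf _)]
  rfl

theorem lap_const {n : ℕ} (c : ℝ) (x : EuclideanSpace ℝ (Fin n)) :
    lap n (fun _ => c) x = 0 := by
  simp [lap]

theorem lap_add {n : ℕ} {f g : EuclideanSpace ℝ (Fin n) → ℝ} {x : EuclideanSpace ℝ (Fin n)}
    (hf : ContDiffAt ℝ 2 f x) (hg : ContDiffAt ℝ 2 g x) :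
    lap n (fun y => f y + g y) x = lap n f x + lap n g x := by
  have h := lap_sub hf (contDiffAt_const.mul hg : ContDiffAt ℝ 2 (fun y => (-1) * g y) x)
  rw [lap_const_mul hg] at h
  simpa using h

/-- Invariance of the Laplacian under `y ↦ a + A y` when `A` flips the signs of some coordinates;
this covers translations, `y ↦ -y` and reflections in coordinate hyperplanes. -/
theorem lap_comp_affine {n : ℕ} {f : EuclideanSpace ℝ (Fin n) → ℝ} (hf : ContDiff ℝ 2 f)
    (A : EuclideanSpace ℝ (Fin n) →L[ℝ] EuclideanSpace ℝ (Fin n)) (s : Fin n → ℝ)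
    (hs : ∀ i, s i * s i = 1)
    (hA : ∀ i, A (EuclideanSpace.single i 1) = s i • EuclideanSpace.single i 1)
    (a x : EuclideanSpace ℝ (Fin n)) :
    lap n (fun y => f (a + A y)) x = lap n f (a + A x) := by
  unfold lap
  refine Finset.sum_congr rfl fun i _ => ?_
  have hd (y : EuclideanSpace ℝ (Fin n)) : HasFDerivAt (fun y => a + A y) A y :=
    A.hasFDerivAt.const_add a
  have h : (fun y => fderiv ℝ (fun y => f (a + A y)) y (EuclideanSpace.single i 1)) =
      fun y => s i * fderiv ℝ f (a + A y) (EuclideanSpace.single i 1) := by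
    funext y
    have h1 : HasFDerivAt (fun y => f (a + A y)) ((fderiv ℝ f (a + A y)).comp A) y :=
      ((hf.differentiable (by norm_num)) (a + A y)).hasFDerivAt.comp y (hd y)
    rw [h1.fderiv]
    simp [hA]
  have h2 := (differentiableAt_fderiv_apply (hf.contDiffAt (x := a + A x))
    (EuclideanSpace.single i 1)).hasFDerivAt.comp x (hd x)
  have h3 := h2.const_mul (s i)
  rw [h]
  erw [h3.fderiv]
  simp [hA, ← mul_assoc, hs]

/-- If a pure second derivative were negative at a local minimum, the restriction to that line would
also have a local maximum there, hence be locally constant. -/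
theorem lap_nonneg_of_isLocalMin {n : ℕ} {f : EuclideanSpace ℝ (Fin n) → ℝ}
    {x : EuclideanSpace ℝ (Fin n)} (hf : ContDiffAt ℝ 2 f x) (hmin : IsLocalMin f x) :
    0 ≤ lap n f x := by
  refine Finset.sum_nonneg fun i _ => ?_
  set e : EuclideanSpace ℝ (Fin n) := EuclideanSpace.single i 1
  by_contra! hneg
  set L : ℝ → EuclideanSpace ℝ (Fin n) := fun s => x + s • e with hL
  have hL0 : L 0 = x := by simp [hL]
  have hLd (s : ℝ) : HasDerivAt L e s := by
    have h := ((hasDerivAt_id s).smul_const e).const_add x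
    rw [one_smul] at h
    exact h
  have hLc : Tendsto L (𝓝 0) (𝓝 x) := by
    have := (hLd 0).continuousAt.tendsto
    rwa [hL0] at this
  set g : ℝ → ℝ := fun s => f (L s) with hg
  have hg1 : deriv g =ᶠ[𝓝 0] fun s => fderiv ℝ f (L s) e := by
    filter_upwards [hLc.eventually (eventually_differentiableAt hf)] with s hs
    exact (hs.hasFDerivAt.comp_hasDerivAt s (hLd s)).deriv
  have hdd : deriv (deriv g) 0 = fderiv ℝ (fun y => fderiv ℝ f y e) x e := by
    rw [hg1.deriv_eq]
    have h := (differentiableAt_fderiv_apply hf e).hasFDerivAt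
    rw [← hL0] at h
    have h' := (h.comp_hasDerivAt 0 (hLd 0)).deriv
    rw [hL0] at h'
    exact h'
  have hgmin : IsLocalMin g 0 := by
    have : ∀ᶠ s in 𝓝 (0:ℝ), f x ≤ f (L s) := hLc.eventually hmin
    filter_upwards [this] with s hs
    simpa [hg, hL0] using hs
  have hgc : ContinuousAt g 0 := by
    have : ContinuousAt f (L 0) := by rw [hL0]; exact hf.continuousAt
    exact this.comp (hLd 0).continuousAt
  have hgmax : IsLocalMax g 0 :=
    isLocalMax_of_deriv_deriv_neg (by rw [hdd]; exact hneg) hgmin.deriv_eq_zero hgc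
  have hgconst : g =ᶠ[𝓝 0] fun _ => g 0 := by
    filter_upwards [hgmin, hgmax] with s h1 h2
    exact le_antisymm h2 h1
  have : deriv (deriv g) 0 = 0 := by
    rw [hgconst.deriv.deriv_eq]; simp
  rw [hdd] at this
  exact hneg.ne this

theorem contDiff_normSq_sub {n : ℕ} (a : EuclideanSpace ℝ (Fin n)) :
    ContDiff ℝ 2 (fun y : EuclideanSpace ℝ (Fin n) => ‖y - a‖ ^ 2) :=
  (contDiff_id.sub contDiff_const).norm_sq ℝ

/-- The Laplacian of `F(|y - a|²)` is `4 |y - a|² F'' + 2 n F'`; only local differentiability of `F`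
is needed. -/
theorem lap_radial {n : ℕ} (F F' : ℝ → ℝ) (F'' : ℝ) (a x : EuclideanSpace ℝ (Fin n))
    (h1 : ∀ᶠ s in 𝓝 (‖x - a‖ ^ 2), HasDerivAt F (F' s) s)
    (h2 : HasDerivAt F' F'' (‖x - a‖ ^ 2)) :
    lap n (fun y => F (‖y - a‖ ^ 2)) x
      = 4 * ‖x - a‖ ^ 2 * F'' + 2 * n * F' (‖x - a‖ ^ 2) := by
  have hq (y : EuclideanSpace ℝ (Fin n)) :
      HasFDerivAt (fun y => ‖y - a‖ ^ 2) (2 • innerSL ℝ (y - a)) y :=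
    ((hasFDerivAt_id y).sub_const a).norm_sq
  have hcont : Tendsto (fun y => ‖y - a‖ ^ 2) (𝓝 x) (𝓝 (‖x - a‖ ^ 2)) :=
    (hq x).continuousAt.tendsto
  have key (i : Fin n) :
      fderiv ℝ (fun y => fderiv ℝ (fun y => F (‖y - a‖ ^ 2)) y (EuclideanSpace.single i 1)) x
        (EuclideanSpace.single i 1) = 4 * F'' * ((x - a) i) ^ 2 + 2 * F' (‖x - a‖ ^ 2) := by
    have he : (fun y => fderiv ℝ (fun y => F (‖y - a‖ ^ 2)) y (EuclideanSpace.single i 1))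
        =ᶠ[𝓝 x] fun y => F' (‖y - a‖ ^ 2) * (2 * (y i - a i)) := by
      filter_upwards [hcont.eventually h1] with y hy
      have := hy.comp_hasFDerivAt y (hq y)
      erw [this.fderiv]
      simp [EuclideanSpace.inner_single_right]
    have hp : HasFDerivAt (fun y : EuclideanSpace ℝ (Fin n) => 2 * (y i - a i))
        ((2:ℝ) • (EuclideanSpace.proj i : EuclideanSpace ℝ (Fin n) →L[ℝ] ℝ)) x :=
      (((EuclideanSpace.proj i : EuclideanSpace ℝ (Fin n) →L[ℝ] ℝ).hasFDerivAt).sub_const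
        (a i)).const_mul 2
    have h3 := (h2.comp_hasFDerivAt x (hq x)).mul hp
    rw [he.fderiv_eq]
    erw [h3.fderiv]
    simp [EuclideanSpace.inner_single_right]
    ring
  unfold lap
  rw [Finset.sum_congr rfl fun i _ => key i, Finset.sum_add_distrib, ← Finset.mul_sum,
    EuclideanSpace.real_norm_sq_eq]
  simp
  ring

theorem lap_normSq_sub {n : ℕ} (a x : EuclideanSpace ℝ (Fin n)) :
    lap n (fun y => ‖y - a‖ ^ 2) x = 2 * n := by
  have := lap_radial (fun s => s) (fun _ => 1) 0 a x
    (Eventually.of_forall fun s => hasDerivAt_id s) (hasDerivAt_const _ _)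
  simpa using this

theorem lap_coord {n : ℕ} (i : Fin n) (x : EuclideanSpace ℝ (Fin n)) :
    lap n (fun y => y i - (y i) ^ 2) x = -2 := by
  have hp (y : EuclideanSpace ℝ (Fin n)) : HasFDerivAt (fun y : EuclideanSpace ℝ (Fin n) => y i)
      (EuclideanSpace.proj i : EuclideanSpace ℝ (Fin n) →L[ℝ] ℝ) y :=
    (EuclideanSpace.proj i : EuclideanSpace ℝ (Fin n) →L[ℝ] ℝ).hasFDerivAt
  have hd (j : Fin n) : (fun y => fderiv ℝ (fun y : EuclideanSpace ℝ (Fin n) => y i - (y i) ^ 2) y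
      (EuclideanSpace.single j 1)) = fun y => (1 - 2 * y i) * (if j = i then 1 else 0) := by
    funext y
    have := (hp y).sub ((hp y).pow 2)
    erw [this.fderiv]
    by_cases hij : j = i
    · subst hij; simp
    · simp [hij, Ne.symm hij]
  unfold lap
  rw [Finset.sum_eq_single i]
  · rw [hd i]
    have := (((hp x).const_mul 2).const_sub 1).mul_const (if i = i then (1:ℝ) else 0)
    erw [this.fderiv]
    simp
  · intro j _ hj
    rw [hd j]; simp [hj]
  · simp

/-! ### Maximum principles and a priori bounds -/

/-- Quantitative strong maximum principle. A nonnegative supersolution of `Δ - C` which is at least `m`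
on a ball of radius `r` is at least `m η` on the concentric ball of radius `R`, with `η` depending
only on `n, C, r, R`. Proof by comparison with the Hopf barrier `m (exp(-α|x-y|²) - exp(-α(R+1)²))`,
a subsolution outside the small ball. -/
theorem hopf_propagation (n : ℕ) {C r R : ℝ} (hC : 0 ≤ C) (hr : 0 < r) (hrR : 0 ≤ R) :
    ∃ η : ℝ, 0 < η ∧ ∀ (w : EuclideanSpace ℝ (Fin n) → ℝ) (m : ℝ)
      (y : EuclideanSpace ℝ (Fin n)), ContDiff ℝ 2 w → (∀ x, 0 ≤ w x) →
      (∀ x, lap n w x ≤ C * w x) → 0 < m → (∀ x, ‖x - y‖ ≤ r → m ≤ w x) →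
      ∀ x, ‖x - y‖ ≤ R → m * η ≤ w x := by
  -- `α ≥ 1` and `4 α r² ≥ 2 n + C + 1` give `4 α² r² - 2 n α ≥ C + 1`
  set α : ℝ := (2 * n + C + 1) / (4 * r ^ 2) + 1 with hα
  have hα1 : 1 ≤ α := by
    have : 0 ≤ (2 * n + C + 1) / (4 * r ^ 2) := by positivity
    linarith
  have hα2 : 2 * n + C + 1 ≤ 4 * α * r ^ 2 := by
    have : (2 * n + C + 1) / (4 * r ^ 2) * (4 * r ^ 2) = 2 * n + C + 1 := by field_simp
    nlinarith [sq_nonneg r]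
  have hα3 (s : ℝ) (hs : r ^ 2 ≤ s) : C + 1 ≤ 4 * s * α ^ 2 - 2 * n * α := by
    have h1 : 4 * α * r ^ 2 ≤ 4 * α * s := by gcongr
    have : C + 1 ≤ 4 * α * s - 2 * n := by linarith
    nlinarith
  refine ⟨Real.exp (-α * R ^ 2) - Real.exp (-α * (R + 1) ^ 2), ?_, ?_⟩
  · rw [sub_pos, Real.exp_lt_exp]
    nlinarith
  intro w m y hw hw0 hlap hm hball
  set ex : EuclideanSpace ℝ (Fin n) → ℝ := fun x => Real.exp (-α * ‖x - y‖ ^ 2) with hex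
  set k : ℝ := Real.exp (-α * (R + 1) ^ 2) with hk
  have hk0 : 0 < k := Real.exp_pos _
  have hexC : ContDiff ℝ 2 ex := (contDiff_const.mul (contDiff_normSq_sub y)).exp
  have hlapex (x : EuclideanSpace ℝ (Fin n)) :
      lap n ex x = (4 * ‖x - y‖ ^ 2 * α ^ 2 - 2 * n * α) * ex x := by
    have hd (s : ℝ) : HasDerivAt (fun s => Real.exp (-α * s)) (-α * Real.exp (-α * s)) s := by
      have := ((hasDerivAt_id s).const_mul (-α)).exp
      simpa [mul_comm] using this
    have := lap_radial (fun s => Real.exp (-α * s)) (fun s => -α * Real.exp (-α * s))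
      (-α * (-α * Real.exp (-α * ‖x - y‖ ^ 2))) y x
      (Eventually.of_forall hd) ((hd _).const_mul _)
    rw [hex, this]; ring
  set φ : EuclideanSpace ℝ (Fin n) → ℝ := fun x => m * (ex x - k) with hφ
  have hφC : ContDiff ℝ 2 φ := contDiff_const.mul (hexC.sub contDiff_const)
  have hlapφ (x : EuclideanSpace ℝ (Fin n)) : lap n φ x = m * lap n ex x := by
    rw [hφ, lap_const_mul (hexC.sub contDiff_const).contDiffAt,
      lap_sub hexC.contDiffAt contDiffAt_const, lap_const, sub_zero]
  have main : ∀ x, ‖x - y‖ ≤ R + 1 → φ x ≤ w x := by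
    by_contra! hcon
    obtain ⟨x0, hx0, hlt0⟩ := hcon
    obtain ⟨x1, hx1, hmin⟩ := (isCompact_closedBall y (R + 1)).exists_isMinOn
      ⟨x0, by simpa [dist_eq_norm] using hx0⟩ (hw.sub hφC).continuous.continuousOn
    have hx1' : ‖x1 - y‖ ≤ R + 1 := by simpa [dist_eq_norm] using hx1
    have hlt : w x1 < φ x1 := by
      have : w x1 - φ x1 ≤ w x0 - φ x0 := hmin (by simpa [dist_eq_norm] using hx0)
      linarith
    have hin : r < ‖x1 - y‖ := by
      by_contra! h
      have h1 := hball x1 h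
      have h2 : ex x1 ≤ 1 := by
        rw [hex]; simp only; rw [Real.exp_le_one_iff]; nlinarith [sq_nonneg ‖x1 - y‖]
      have : φ x1 ≤ m := by simp only [hφ]; nlinarith
      linarith
    have hout : ‖x1 - y‖ < R + 1 := by
      refine lt_of_le_of_ne hx1' fun h => ?_
      have : φ x1 = 0 := by simp [hφ, hex, hk, h]
      linarith [hw0 x1]
    have hloc : IsLocalMin (fun x => w x - φ x) x1 :=
      hmin.isLocalMin (Filter.mem_of_superset
        (Metric.isOpen_ball.mem_nhds (by simpa [dist_eq_norm] using hout))
        Metric.ball_subset_closedBall)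
    have h0 := lap_nonneg_of_isLocalMin (hw.sub hφC).contDiffAt hloc
    rw [lap_sub hw.contDiffAt hφC.contDiffAt, hlapφ, hlapex] at h0
    have h1 := hlap x1
    have hex0 : 0 < ex x1 := Real.exp_pos _
    have h2 : (C + 1) * ex x1 ≤ (4 * ‖x1 - y‖ ^ 2 * α ^ 2 - 2 * n * α) * ex x1 := by
      gcongr
      exact hα3 _ (by gcongr)
    have h3 : C * w x1 ≤ C * φ x1 := by gcongr
    have h4 : φ x1 ≤ m * ex x1 := by simp only [hφ]; nlinarith
    have h5 : C * φ x1 ≤ C * (m * ex x1) := by gcongr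
    have h6 : m * ((C + 1) * ex x1) ≤ m * ((4 * ‖x1 - y‖ ^ 2 * α ^ 2 - 2 * n * α) * ex x1) := by
      gcongr
    nlinarith [mul_pos hm hex0]
  intro x hx
  refine le_trans ?_ (main x (by linarith))
  simp only [hφ, hex]
  have : Real.exp (-α * R ^ 2) ≤ Real.exp (-α * ‖x - y‖ ^ 2) := by
    rw [Real.exp_le_exp]
    have : ‖x - y‖ ^ 2 ≤ R ^ 2 := by gcongr
    nlinarith
  gcongr

/-- Maximum principle on the whole space for a function bounded below: adding `ε |· - x|²` makes the
infimum attained at the price of `2 n ε` in the Laplacian. -/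
theorem ge_of_lap_le {n : ℕ} {w : EuclideanSpace ℝ (Fin n) → ℝ} (hw : ContDiff ℝ 2 w)
    {K c b : ℝ} (hK : ∀ x, -K ≤ w x) (hc : 0 < c) (hb : 0 ≤ b)
    (hlap : ∀ x, w x < 0 → lap n w x ≤ c * w x + c * b) (x : EuclideanSpace ℝ (Fin n)) :
    -b ≤ w x := by
  by_contra! hx
  set d : ℝ := -b - w x with hd
  have hd0 : 0 < d := by rw [hd]; linarith
  obtain ⟨ε, hε, hεd⟩ : ∃ ε : ℝ, 0 < ε ∧ ε * (2 * n) < c * d := by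
    refine ⟨c * d / (2 * n + 1), by positivity, ?_⟩
    rw [div_mul_eq_mul_div, div_lt_iff₀ (by positivity)]
    have := mul_pos hc hd0
    nlinarith
  set g : EuclideanSpace ℝ (Fin n) → ℝ := fun y => w y + ε * ‖y - x‖ ^ 2 with hg
  have hqC : ContDiff ℝ 2 (fun y => ε * ‖y - x‖ ^ 2) :=
    contDiff_const.mul (contDiff_normSq_sub x)
  have hgC : ContDiff ℝ 2 g := hw.add hqC
  -- outside this ball the penalty exceeds the oscillation `w x + K`
  set ρ : ℝ := (w x + K) / ε + 1 with hρ
  have hwK : 0 ≤ w x + K := by linarith [hK x]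
  have hρ1 : 1 ≤ ρ := by
    have : 0 ≤ (w x + K) / ε := by positivity
    linarith
  obtain ⟨x1, hx1, hmin⟩ := (isCompact_closedBall x ρ).exists_isMinOn
    ⟨x, by simp; linarith⟩ hgC.continuous.continuousOn
  have hgx : g x1 ≤ g x := hmin (by simp; linarith)
  have hgxx : g x = w x := by simp [hg]
  have hglob : ∀ y, g x1 ≤ g y := by
    intro y
    by_cases hy : ‖y - x‖ ≤ ρ
    · exact hmin (by simpa [dist_eq_norm] using hy)
    · push Not at hy
      have h1 : ρ ≤ ‖y - x‖ ^ 2 := by nlinarith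
      have h2 : ε * ρ ≤ ε * ‖y - x‖ ^ 2 := by gcongr
      have h3 : ε * ρ = w x + K + ε := by rw [hρ]; field_simp
      have : g y = w y + ε * ‖y - x‖ ^ 2 := rfl
      linarith [hK y]
  have h0 := lap_nonneg_of_isLocalMin hgC.contDiffAt
    (Eventually.of_forall hglob : IsLocalMin g x1)
  rw [hg, lap_add hw.contDiffAt hqC.contDiffAt,
    lap_const_mul (contDiff_normSq_sub x).contDiffAt, lap_normSq_sub] at h0
  have hw1 : w x1 ≤ w x := by
    have : 0 ≤ ε * ‖x1 - x‖ ^ 2 := by positivity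
    have : g x1 = w x1 + ε * ‖x1 - x‖ ^ 2 := rfl
    linarith
  have h1 := hlap x1 (by linarith)
  have : c * w x1 ≤ c * w x := by gcongr
  have : c * d = -(c * b) - c * w x := by rw [hd]; ring
  linarith

/-- Maximum principle for a cooperative, diagonally dominant pair of inequalities: a common lower bound
`-b` for `w` and `z` improves to `-b / 2`, and this is iterated. -/
theorem cooperative_max_principle {n : ℕ} {w z : EuclideanSpace ℝ (Fin n) → ℝ}
    (hw : ContDiff ℝ 2 w) (hz : ContDiff ℝ 2 z) {c K : ℝ} (hc : 0 < c)
    (hwK : ∀ x, -K ≤ w x) (hzK : ∀ x, -K ≤ z x)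
    (hlw : ∀ x, w x < 0 → lap n w x ≤ c * w x + c / 2 * max 0 (-z x))
    (hlz : ∀ x, z x < 0 → lap n z x ≤ c * z x + c / 2 * max 0 (-w x))
    (x : EuclideanSpace ℝ (Fin n)) : 0 ≤ w x ∧ 0 ≤ z x := by
  set B : ℝ := max K 0 with hB
  have hB0 : 0 ≤ B := le_max_right _ _
  have step (k : ℕ) : ∀ x, -(B * (1 / 2) ^ k) ≤ w x ∧ -(B * (1 / 2) ^ k) ≤ z x := by
    induction k with
    | zero =>
      intro x
      have : K ≤ B := le_max_left _ _
      simp only [pow_zero, mul_one]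
      exact ⟨by linarith [hwK x], by linarith [hzK x]⟩
    | succ k ih =>
      have hb : 0 ≤ B * (1 / 2) ^ (k + 1) := by positivity
      have he : B * (1 / 2 : ℝ) ^ k = 2 * (B * (1 / 2) ^ (k + 1)) := by rw [pow_succ]; ring
      intro x
      constructor
      · refine ge_of_lap_le hw hwK hc hb (fun y hy => (hlw y hy).trans ?_) x
        have : max 0 (-z y) ≤ 2 * (B * (1 / 2) ^ (k + 1)) :=
          max_le (by positivity) (by linarith [(ih y).2])
        nlinarith
      · refine ge_of_lap_le hz hzK hc hb (fun y hy => (hlz y hy).trans ?_) x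
        have : max 0 (-w y) ≤ 2 * (B * (1 / 2) ^ (k + 1)) :=
          max_le (by positivity) (by linarith [(ih y).1])
        nlinarith
  have hlim : Tendsto (fun k : ℕ => -(B * (1 / 2 : ℝ) ^ k)) atTop (𝓝 0) := by
    have := ((tendsto_pow_atTop_nhds_zero_of_lt_one (r := (1 / 2 : ℝ))
      (by norm_num) (by norm_num)).const_mul B).neg
    simpa using this
  exact ⟨le_of_tendsto' hlim fun k => (step k x).1, le_of_tendsto' hlim fun k => (step k x).2⟩

/-- Keller–Osserman bound: no growth assumption is made on `u`. The function `G / (1 - |x - a|² / R²)`,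
with `G` the least constant keeping it above `u`, touches `u` from above in the ball of radius `R`;
this gives `u(a)² ≤ 1 + O(R⁻²)`. -/
theorem le_one_of_lap_ge {n : ℕ} {u : EuclideanSpace ℝ (Fin n) → ℝ} (hu : ContDiff ℝ 2 u)
    (hu0 : ∀ x, 0 ≤ u x) (hlap : ∀ x, u x ^ 3 - u x ≤ lap n u x)
    (a : EuclideanSpace ℝ (Fin n)) : u a ≤ 1 := by
  have key (R : ℝ) (hR : 0 < R) : u a ^ 2 ≤ 1 + (2 * n + 8) / R ^ 2 := by
    set ρ : EuclideanSpace ℝ (Fin n) → ℝ := fun x => 1 - ‖x - a‖ ^ 2 / R ^ 2 with hρ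
    have hρC : ContDiff ℝ 2 ρ := contDiff_const.sub ((contDiff_normSq_sub a).div_const _)
    obtain ⟨x1, hx1, hmax⟩ := (isCompact_closedBall a R).exists_isMaxOn
      ⟨a, by simp; linarith⟩ (hu.mul hρC).continuous.continuousOn
    set G : ℝ := u x1 * ρ x1 with hG
    have hGa : u a ≤ G := by
      have h : u a * ρ a ≤ u x1 * ρ x1 := hmax (by simp; linarith)
      simpa [hρ] using h
    by_cases hG0 : G ≤ 0
    · have : u a = 0 := le_antisymm (by linarith) (hu0 a)
      rw [this, zero_pow two_ne_zero]; positivity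
    push Not at hG0
    have hx1' : ‖x1 - a‖ ≤ R := by simpa [dist_eq_norm] using hx1
    have hρ1 : 0 < ρ x1 := by
      by_contra! h
      nlinarith [hu0 x1]
    have hlt : ‖x1 - a‖ ^ 2 < R ^ 2 := by
      have : ‖x1 - a‖ ^ 2 / R ^ 2 < 1 := by simp only [hρ] at hρ1; linarith
      rwa [div_lt_one (by positivity)] at this
    have hlt' : ‖x1 - a‖ < R := lt_of_pow_lt_pow_left₀ 2 hR.le hlt
    have hρle : ρ x1 ≤ 1 := by
      have : 0 ≤ ‖x1 - a‖ ^ 2 / R ^ 2 := by positivity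
      simp only [hρ]; linarith
    -- `G / ρ` touches `u` from above at `x1`
    have hbC : ContDiffAt ℝ 2 (fun x => G * (ρ x)⁻¹) x1 :=
      contDiffAt_const.mul (hρC.contDiffAt.inv hρ1.ne')
    have hloc : IsLocalMin (fun x => G * (ρ x)⁻¹ - u x) x1 := by
      have hnb : ∀ᶠ x in 𝓝 x1, x ∈ Metric.ball a R :=
        Metric.isOpen_ball.mem_nhds (by simpa [dist_eq_norm] using hlt')
      filter_upwards [hnb, hρC.continuous.continuousAt.eventually (lt_mem_nhds hρ1)] with x hx hρx
      have h1 : u x * ρ x ≤ G := hmax (Metric.ball_subset_closedBall hx)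
      have h2 : u x ≤ G * (ρ x)⁻¹ := by rwa [← div_eq_mul_inv, le_div_iff₀ hρx]
      have h3 : G * (ρ x1)⁻¹ = u x1 := by rw [hG]; field_simp
      linarith
    have h0 := lap_nonneg_of_isLocalMin (hbC.sub hu.contDiffAt) hloc
    have hinvC : ContDiffAt ℝ 2 (fun x => (ρ x)⁻¹) x1 := hρC.contDiffAt.inv hρ1.ne'
    rw [lap_sub hbC hu.contDiffAt, lap_const_mul hinvC] at h0
    have hlapρ : lap n (fun x => (ρ x)⁻¹) x1
        = 4 * ‖x1 - a‖ ^ 2 * (2 / R ^ 4 / ρ x1 ^ 3) + 2 * n * (1 / R ^ 2 * (ρ x1 ^ 2)⁻¹) := by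
      have hs (s : ℝ) : HasDerivAt (fun s => 1 - s / R ^ 2) (-(1 / R ^ 2)) s :=
        ((hasDerivAt_id s).div_const _).const_sub 1
      refine lap_radial (fun s => (1 - s / R ^ 2)⁻¹) (fun s => 1 / R ^ 2 * ((1 - s / R ^ 2) ^ 2)⁻¹)
        _ a x1 ?_ ?_
      · have : ∀ᶠ s in 𝓝 (‖x1 - a‖ ^ 2), 0 < 1 - s / R ^ 2 :=
          (hs _).continuousAt.eventually (lt_mem_nhds hρ1)
        filter_upwards [this] with s hs0
        refine HasDerivAt.congr_deriv ((hs s).inv hs0.ne' : HasDerivAt (fun s => (1 - s / R ^ 2)⁻¹)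
          _ s) ?_
        ring
      · have h1 := ((hs (‖x1 - a‖ ^ 2)).pow 2).inv (pow_ne_zero 2 hρ1.ne')
        have h2 := h1.const_mul (1 / R ^ 2)
        have hne : 1 - ‖x1 - a‖ ^ 2 / R ^ 2 ≠ 0 := hρ1.ne'
        refine HasDerivAt.congr_deriv (h2 : HasDerivAt
          (fun s => 1 / R ^ 2 * ((1 - s / R ^ 2) ^ 2)⁻¹) _ (‖x1 - a‖ ^ 2)) ?_
        change _ = 2 / R ^ 4 / (1 - ‖x1 - a‖ ^ 2 / R ^ 2) ^ 3
        simp only [Pi.pow_apply]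
        generalize 1 - ‖x1 - a‖ ^ 2 / R ^ 2 = q at hne
        field_simp
        norm_num
        ring
    have h1 : lap n (fun x => (ρ x)⁻¹) x1 ≤ (2 * n + 8) / R ^ 2 / ρ x1 ^ 3 := by
      rw [hlapρ, ← div_eq_mul_inv]
      have e1 : 4 * ‖x1 - a‖ ^ 2 * (2 / R ^ 4 / ρ x1 ^ 3) ≤ 8 / R ^ 2 / ρ x1 ^ 3 := by
        have : 4 * ‖x1 - a‖ ^ 2 * (2 / R ^ 4 / ρ x1 ^ 3) ≤ 4 * R ^ 2 * (2 / R ^ 4 / ρ x1 ^ 3) := by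
          gcongr
        refine this.trans (le_of_eq ?_)
        field_simp; norm_num
      have e2 : 2 * n * (1 / R ^ 2 / ρ x1 ^ 2) ≤ 2 * n / R ^ 2 / ρ x1 ^ 3 := by
        have : 1 / R ^ 2 / ρ x1 ^ 2 ≤ 1 / R ^ 2 / ρ x1 ^ 3 := by
          apply div_le_div_of_nonneg_left (by positivity) (by positivity)
          exact pow_le_pow_of_le_one hρ1.le hρle (by norm_num)
        calc 2 * n * (1 / R ^ 2 / ρ x1 ^ 2) ≤ 2 * n * (1 / R ^ 2 / ρ x1 ^ 3) := by gcongr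
          _ = _ := by ring
      calc _ ≤ _ := add_le_add e1 e2
        _ = _ := by ring
    have h2 := hlap x1
    have h3 : u x1 = G / ρ x1 := by rw [hG]; field_simp
    have h4 : (G / ρ x1) ^ 3 - G / ρ x1 ≤ G * ((2 * n + 8) / R ^ 2 / ρ x1 ^ 3) := by
      have : G * lap n (fun x => (ρ x)⁻¹) x1 ≤ G * ((2 * n + 8) / R ^ 2 / ρ x1 ^ 3) := by gcongr
      rw [h3] at h2
      linarith
    have h5 : G ^ 2 - ρ x1 ^ 2 ≤ (2 * n + 8) / R ^ 2 := by
      have h6 : (G / ρ x1) ^ 3 - G / ρ x1 = G / ρ x1 ^ 3 * (G ^ 2 - ρ x1 ^ 2) := by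
        field_simp
      have h7 : G * ((2 * n + 8) / R ^ 2 / ρ x1 ^ 3) = G / ρ x1 ^ 3 * ((2 * n + 8) / R ^ 2) := by
        ring
      rw [h6, h7] at h4
      exact le_of_mul_le_mul_left h4 (by positivity)
    have h6 : ρ x1 ^ 2 ≤ 1 := pow_le_one₀ hρ1.le hρle
    have h7 : u a ^ 2 ≤ G ^ 2 := pow_le_pow_left₀ (hu0 a) hGa 2
    linarith
  have hlim : Tendsto (fun R : ℝ => 1 + (2 * n + 8) / R ^ 2) atTop (𝓝 (1 + 0)) :=
    tendsto_const_nhds.add (tendsto_const_nhds.div_atTop (tendsto_pow_atTop (by norm_num)))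
  have h1 : u a ^ 2 ≤ 1 + 0 :=
    ge_of_tendsto hlim ((eventually_gt_atTop 0).mono fun R hR => key R hR)
  nlinarith [hu0 a]

/-! ### Gradient estimate -/

/-- Interior gradient estimate. The difference of `u` and its reflection in a coordinate hyperplane
through `x` vanishes on that hyperplane, and is compared in a half ball with
`|y|² + D (y_i - y_i²)`. -/
theorem partial_le_of_lap_bound {n : ℕ} {u : EuclideanSpace ℝ (Fin n) → ℝ} (hu : ContDiff ℝ 2 u)
    (hu0 : ∀ x, 0 ≤ u x) (hu1 : ∀ x, u x ≤ 1) {K : ℝ} (hK : ∀ x, |lap n u x| ≤ K) (i : Fin n)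
    (x : EuclideanSpace ℝ (Fin n)) :
    fderiv ℝ u x (EuclideanSpace.single i 1) ≤ n + K + 2 := by
  have hK0 : 0 ≤ K := (abs_nonneg _).trans (hK x)
  set e : EuclideanSpace ℝ (Fin n) := EuclideanSpace.single i 1 with he
  set D : ℝ := n + K + 1 with hD
  -- the reflection in the hyperplane `y i = 0`
  set S : EuclideanSpace ℝ (Fin n) →L[ℝ] EuclideanSpace ℝ (Fin n) :=
    ContinuousLinearMap.id ℝ _ -
      (2 : ℝ) • (EuclideanSpace.proj i : EuclideanSpace ℝ (Fin n) →L[ℝ] ℝ).smulRight e with hS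
  have hSa (y : EuclideanSpace ℝ (Fin n)) : S y = y - (2 * y i) • e := by
    simp [hS, smul_smul]
  have hSb (j : Fin n) : S (EuclideanSpace.single j 1)
      = (if j = i then (-1 : ℝ) else 1) • EuclideanSpace.single j 1 := by
    rw [hSa]
    by_cases hji : j = i
    · subst hji
      simp only [he, PiLp.single_apply, if_true, mul_one]
      module
    · simp [hji, Ne.symm hji]
  set f : EuclideanSpace ℝ (Fin n) → ℝ := fun y => u (x + y) - u (x + S y) with hf
  have hf1C : ContDiff ℝ 2 (fun y => u (x + y)) := hu.comp (contDiff_const.add contDiff_id)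
  have hf2C : ContDiff ℝ 2 (fun y => u (x + S y)) := hu.comp (contDiff_const.add S.contDiff)
  have hfC : ContDiff ℝ 2 f := hf1C.sub hf2C
  have hlapf (y : EuclideanSpace ℝ (Fin n)) : -(2 * K) ≤ lap n f y := by
    rw [hf, lap_sub hf1C.contDiffAt hf2C.contDiffAt,
      lap_comp_affine hu S (fun j => if j = i then -1 else 1) (fun j => by split_ifs <;> norm_num)
        hSb x y]
    have h1 := lap_comp_affine hu (ContinuousLinearMap.id ℝ _) (fun _ => 1) (by simp) (by simp) x y
    simp only [ContinuousLinearMap.id_apply] at h1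
    rw [h1]
    linarith [(abs_le.1 (hK (x + y))).1, (abs_le.1 (hK (x + S y))).2]
  set ψ : EuclideanSpace ℝ (Fin n) → ℝ := fun y => ‖y - 0‖ ^ 2 + D * (y i - y i ^ 2) with hψ
  have hcoordC : ContDiff ℝ 2 (fun y : EuclideanSpace ℝ (Fin n) => y i) :=
    (EuclideanSpace.proj i : EuclideanSpace ℝ (Fin n) →L[ℝ] ℝ).contDiff
  have hcC : ContDiff ℝ 2 (fun y : EuclideanSpace ℝ (Fin n) => y i - y i ^ 2) :=
    hcoordC.sub (hcoordC.pow 2)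
  have hDcC : ContDiff ℝ 2 (fun y : EuclideanSpace ℝ (Fin n) => D * (y i - y i ^ 2)) :=
    contDiff_const.mul hcC
  have hψC : ContDiff ℝ 2 ψ := (contDiff_normSq_sub 0).add hDcC
  have hlapψ (y : EuclideanSpace ℝ (Fin n)) : lap n ψ y = 2 * n + D * (-2) := by
    rw [hψ, lap_add (contDiff_normSq_sub 0).contDiffAt hDcC.contDiffAt, lap_normSq_sub,
      lap_const_mul hcC.contDiffAt, lap_coord]
  have hcoord_le (y : EuclideanSpace ℝ (Fin n)) : y i ≤ ‖y‖ :=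
    (le_abs_self _).trans (by simpa using PiLp.norm_apply_le y i)
  have main : ∀ y, ‖y‖ ≤ 1 → 0 ≤ y i → f y ≤ ψ y := by
    by_contra! hcon
    obtain ⟨y0, hy0, hy0i, hlt0⟩ := hcon
    have hcomp : IsCompact (Metric.closedBall (0 : EuclideanSpace ℝ (Fin n)) 1 ∩ {y | 0 ≤ y i}) :=
      (isCompact_closedBall _ _).inter_right (isClosed_le continuous_const hcoordC.continuous)
    obtain ⟨y1, ⟨hy1, hy1i⟩, hmin⟩ := hcomp.exists_isMinOn ⟨y0, by simpa using hy0, hy0i⟩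
      (hψC.sub hfC).continuous.continuousOn
    have hlt : ψ y1 < f y1 := by
      have : ψ y1 - f y1 ≤ ψ y0 - f y0 := hmin ⟨by simpa using hy0, hy0i⟩
      linarith
    have hy1' : ‖y1‖ ≤ 1 := by simpa using hy1
    have hy1i' : 0 ≤ y1 i := hy1i
    have hD0 : 0 ≤ D := by positivity
    have hq : 0 ≤ D * (y1 i - y1 i ^ 2) := by
      apply mul_nonneg hD0
      nlinarith [hcoord_le y1]
    have hψ1 : ψ y1 = ‖y1‖ ^ 2 + D * (y1 i - y1 i ^ 2) := by simp [hψ]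
    have hin1 : ‖y1‖ < 1 := by
      refine lt_of_le_of_ne hy1' fun h => ?_
      rw [h] at hψ1
      have : f y1 = u (x + y1) - u (x + S y1) := rfl
      linarith [hu1 (x + y1), hu0 (x + S y1)]
    have hin2 : 0 < y1 i := by
      refine lt_of_le_of_ne hy1i' fun h => ?_
      have : f y1 = 0 := by simp [hf, hSa, ← h]
      nlinarith [sq_nonneg ‖y1‖]
    have hloc : IsLocalMin (fun y => ψ y - f y) y1 := by
      refine hmin.isLocalMin (Filter.inter_mem ?_ ?_)
      · exact Filter.mem_of_superset (Metric.isOpen_ball.mem_nhds (by simpa using hin1))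
          Metric.ball_subset_closedBall
      · exact (hcoordC.continuous.continuousAt.eventually (lt_mem_nhds hin2)).mono
          fun y hy => le_of_lt hy
    have h0 := lap_nonneg_of_isLocalMin (hψC.sub hfC).contDiffAt hloc
    rw [lap_sub hψC.contDiffAt hfC.contDiffAt, hlapψ] at h0
    have := hlapf y1
    linarith
  have hline (s : ℝ) : HasDerivAt (fun s : ℝ => x + s • e) e s := by
    have h := ((hasDerivAt_id s).smul_const e).const_add x
    rw [one_smul] at h
    exact h
  set d : ℝ := fderiv ℝ u x e with hd
  have hg : HasDerivAt (fun s : ℝ => u (x + s • e) - u (x + (-s) • e)) (d + d) 0 := by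
    have hux := (hu.differentiable (by norm_num) x).hasFDerivAt
    have h1 : HasDerivAt (fun s : ℝ => u (x + s • e)) d 0 := by
      have hux' : HasFDerivAt u (fderiv ℝ u x) (x + (0:ℝ) • e) := by simpa using hux
      exact hux'.comp_hasDerivAt 0 (hline 0)
    have h2 : HasDerivAt (fun s : ℝ => u (x + (-s) • e)) (-d) 0 := by
      have h1' : HasDerivAt (fun s : ℝ => u (x + s • e)) d (-0) := by simpa using h1
      have := h1'.scomp 0 (hasDerivAt_neg (0:ℝ))
      rw [neg_one_smul] at this
      exact this
    have h3 := h1.sub h2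
    rw [sub_neg_eq_add] at h3
    exact h3
  have hle : d + d ≤ D + 1 := by
    have hsl := hg.tendsto_slope_zero_right
    refine le_of_tendsto hsl ?_
    filter_upwards [Ioo_mem_nhdsGT (show (0:ℝ) < 1 by norm_num)] with s hs
    have hm := main (s • e) (by simp [he, norm_smul, abs_of_pos hs.1, hs.2.le])
      (by simp [he, hs.1.le])
    have hSs : S (s • e) = (-s) • e := by
      rw [hSa]; simp only [he, PiLp.smul_apply, PiLp.single_apply, if_true, smul_eq_mul, mul_one]
      module
    have hm' : u (x + s • e) - u (x + (-s) • e) ≤ s ^ 2 + D * (s - s ^ 2) := by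
      have h1 : f (s • e) = u (x + s • e) - u (x + (-s) • e) := by simp only [hf]; rw [hSs]
      have h2 : ψ (s • e) = s ^ 2 + D * (s - s ^ 2) := by
        simp [hψ, he, norm_smul]
      rwa [h1, h2] at hm
    simp only [zero_add, zero_smul, neg_zero, add_zero, sub_self, sub_zero, smul_eq_mul]
    rw [inv_mul_le_iff₀ hs.1]
    have hD0 : 0 ≤ D := by positivity
    nlinarith [hs.1, hs.2, mul_nonneg hD0 (sq_nonneg s)]
  have : 0 ≤ D := by positivity
  have hn : (0:ℝ) ≤ n := by positivity
  rw [hD] at hle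
  linarith

theorem lipschitz_of_lap_bound {n : ℕ} {u : EuclideanSpace ℝ (Fin n) → ℝ} (hu : ContDiff ℝ 2 u)
    (hu0 : ∀ x, 0 ≤ u x) (hu1 : ∀ x, u x ≤ 1) {K : ℝ} (hK : ∀ x, |lap n u x| ≤ K) :
    ∃ L : ℝ, 0 < L ∧ ∀ x y, |u x - u y| ≤ L * ‖x - y‖ := by
  set B : ℝ := n + K + 2 with hB
  have hK0 : 0 ≤ K := (abs_nonneg _).trans (hK 0)
  have hB0 : 0 < B := by positivity
  have hpart (i : Fin n) (x : EuclideanSpace ℝ (Fin n)) :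
      |fderiv ℝ u x (EuclideanSpace.single i 1)| ≤ B := by
    rw [abs_le]
    refine ⟨?_, partial_le_of_lap_bound hu hu0 hu1 hK i x⟩
    have h := partial_le_of_lap_bound (u := fun x => 1 - u x) (contDiff_const.sub hu)
      (fun x => by linarith [hu1 x]) (fun x => by linarith [hu0 x]) (K := K)
      (fun x => by
        rw [lap_sub contDiffAt_const hu.contDiffAt, lap_const, zero_sub, abs_neg]; exact hK x) i x
    rw [fderiv_const_sub] at h
    simp only [neg_apply] at h
    linarith
  have hfd (x : EuclideanSpace ℝ (Fin n)) : ‖fderiv ℝ u x‖ ≤ (n + 1) * B := by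
    refine ContinuousLinearMap.opNorm_le_bound _ (by positivity) fun h => ?_
    have hsum : h = ∑ i, h i • (EuclideanSpace.single i 1 : EuclideanSpace ℝ (Fin n)) := by
      ext j
      simp [Finset.sum_apply, Pi.single_apply]
    have h1 : fderiv ℝ u x h = ∑ i, h i * fderiv ℝ u x (EuclideanSpace.single i 1) := by
      conv_lhs => rw [hsum]
      simp
    rw [h1]
    refine (norm_sum_le _ _).trans ?_
    have h2 : ∀ i ∈ Finset.univ,
        ‖h i * fderiv ℝ u x (EuclideanSpace.single i 1)‖ ≤ ‖h‖ * B := by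
      intro i _
      rw [norm_mul]
      exact mul_le_mul (PiLp.norm_apply_le h i) (hpart i x) (norm_nonneg _) (norm_nonneg _)
    refine (Finset.sum_le_sum h2).trans ?_
    simp only [Finset.sum_const, Finset.card_univ, Fintype.card_fin, nsmul_eq_mul]
    nlinarith [mul_nonneg (norm_nonneg h) hB0.le]
  refine ⟨(n + 1) * B, by positivity, fun x y => ?_⟩
  have := Convex.norm_image_sub_le_of_norm_fderiv_le (s := Set.univ) (f := u) (𝕜 := ℝ)
    (fun z _ => hu.differentiable (by norm_num) z) (fun z _ => hfd z) convex_univ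
    (Set.mem_univ y) (Set.mem_univ x)
  simpa using this

/-! ### Solutions of the system -/

/-- The hypotheses of the theorem, bundled so that they can be passed through the symmetry
`(u, v) ↦ (v(-·), u(-·))`. -/
structure Front (N : ℕ) (Λ : ℝ) (u v : EuclideanSpace ℝ (Fin (N + 1)) → ℝ) : Prop where
  hΛ : 1 < Λ
  sol : IsSolution (N + 1) Λ u v
  hu : ∀ x, 0 ≤ u x
  hv : ∀ x, 0 ≤ v x
  hinf : Hinf N u v

theorem lap_translate {n : ℕ} {f : EuclideanSpace ℝ (Fin n) → ℝ} (hf : ContDiff ℝ 2 f)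
    (a x : EuclideanSpace ℝ (Fin n)) : lap n (fun y => f (y + a)) x = lap n f (x + a) := by
  have h := lap_comp_affine hf (ContinuousLinearMap.id ℝ _) (fun _ => 1) (by simp) (by simp) a x
  simpa only [ContinuousLinearMap.id_apply, add_comm a] using h

theorem lap_comp_neg {n : ℕ} {f : EuclideanSpace ℝ (Fin n) → ℝ} (hf : ContDiff ℝ 2 f)
    (x : EuclideanSpace ℝ (Fin n)) : lap n (fun y => f (-y)) x = lap n f (-x) := by
  have h := lap_comp_affine hf (-ContinuousLinearMap.id ℝ _) (fun _ => -1) (by simp)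
    (by simp) 0 x
  simpa using h

namespace Front

variable {N : ℕ} {Λ : ℝ} {u v : EuclideanSpace ℝ (Fin (N + 1)) → ℝ}

theorem symm (h : Front N Λ u v) : Front N Λ (fun x => v (-x)) (fun x => u (-x)) where
  hΛ := h.hΛ
  sol := by
    obtain ⟨hu, hv, h1, h2⟩ := h.sol
    refine ⟨hv.comp contDiff_neg, hu.comp contDiff_neg, fun x => ?_, fun x => ?_⟩
    · rw [lap_comp_neg hv, h2]; ring
    · rw [lap_comp_neg hu, h1]; ring
  hu x := h.hv _
  hv x := h.hu _
  hinf := by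
    refine ⟨fun ε hε => ?_, fun ε hε => ?_⟩
    · obtain ⟨M, hM⟩ := h.hinf.2 ε hε
      exact ⟨-M, fun x hx => (hM (-x) (by simp; linarith)).symm⟩
    · obtain ⟨M, hM⟩ := h.hinf.1 ε hε
      exact ⟨-M, fun x hx => (hM (-x) (by simp; linarith)).symm⟩

theorem exists_far (h : Front N Λ u v) {ε : ℝ} (hε : 0 < ε) :
    ∃ M : ℝ, 0 < M ∧ ∀ x : EuclideanSpace ℝ (Fin (N + 1)),
      (M ≤ x (Fin.last N) → 1 - ε < u x ∧ v x < ε) ∧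
      (x (Fin.last N) ≤ -M → u x < ε ∧ 1 - ε < v x) := by
  obtain ⟨M1, hM1⟩ := h.hinf.1 ε hε
  obtain ⟨M2, hM2⟩ := h.hinf.2 ε hε
  refine ⟨|M1| + |M2| + 1, by positivity, fun x => ⟨fun hx => ?_, fun hx => ?_⟩⟩
  · have := hM1 x (by linarith [le_abs_self M1, abs_nonneg M2])
    rw [abs_lt, abs_lt] at this
    exact ⟨by linarith [this.1.1], this.2.2⟩
  · have := hM2 x (by linarith [neg_abs_le M2, abs_nonneg M1])
    rw [abs_lt, abs_lt] at this
    exact ⟨this.1.2, by linarith [this.2.1]⟩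

theorem contDiff_u (h : Front N Λ u v) : ContDiff ℝ 2 u := h.sol.1

theorem contDiff_v (h : Front N Λ u v) : ContDiff ℝ 2 v := h.sol.2.1

theorem lap_u (h : Front N Λ u v) (x : EuclideanSpace ℝ (Fin (N + 1))) :
    lap (N + 1) u x = u x ^ 3 - u x + Λ * u x * v x ^ 2 := by
  linarith [h.sol.2.2.1 x]

theorem lap_v (h : Front N Λ u v) (x : EuclideanSpace ℝ (Fin (N + 1))) :
    lap (N + 1) v x = v x ^ 3 - v x + Λ * u x ^ 2 * v x := by
  linarith [h.sol.2.2.2 x]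

theorem u_le_one (h : Front N Λ u v) (x : EuclideanSpace ℝ (Fin (N + 1))) : u x ≤ 1 := by
  refine le_one_of_lap_ge h.contDiff_u h.hu (fun y => ?_) x
  rw [h.lap_u]
  have := h.hu y
  have := h.hΛ
  have : 0 ≤ Λ * u y * v y ^ 2 := by positivity
  linarith

theorem v_le_one (h : Front N Λ u v) (x : EuclideanSpace ℝ (Fin (N + 1))) : v x ≤ 1 := by
  simpa using h.symm.u_le_one (-x)

theorem lipschitz_u (h : Front N Λ u v) :
    ∃ L : ℝ, 0 < L ∧ ∀ x y, |u x - u y| ≤ L * ‖x - y‖ := by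
  refine lipschitz_of_lap_bound h.contDiff_u h.hu h.u_le_one (K := 1 + Λ) fun x => ?_
  have h1 := h.hu x
  have h2 := h.u_le_one x
  have h3 : v x ^ 2 ≤ 1 := pow_le_one₀ (h.hv x) (h.v_le_one x)
  have h4 : u x ^ 3 ≤ 1 := pow_le_one₀ h1 h2
  have h5 : 0 ≤ u x ^ 3 := by positivity
  have hΛ := h.hΛ
  have h6 : 0 ≤ Λ * u x * v x ^ 2 := by positivity
  have h7 : Λ * u x * v x ^ 2 ≤ Λ * 1 * 1 := by gcongr
  rw [h.lap_u, abs_le]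
  constructor <;> linarith

theorem lipschitz_v (h : Front N Λ u v) :
    ∃ L : ℝ, 0 < L ∧ ∀ x y, |v x - v y| ≤ L * ‖x - y‖ := by
  obtain ⟨L, hL, hLip⟩ := h.symm.lipschitz_u
  refine ⟨L, hL, fun x y => ?_⟩
  have := hLip (-x) (-y)
  simp only [neg_neg] at this
  rwa [show -x - -y = -(x - y) by abel, norm_neg] at this

/-- Strict bounds away from the limit at `x_N → -∞`: both `u` and `1 - v` are nonnegative
supersolutions and are large far up, so the positivity propagates down, uniformly in `x'`. -/
theorem exists_gap_above (h : Front N Λ u v) (M : ℝ) :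
    ∃ κ : ℝ, 0 < κ ∧ ∀ x : EuclideanSpace ℝ (Fin (N + 1)), -M ≤ x (Fin.last N) →
      κ ≤ u x ∧ v x ≤ 1 - κ := by
  have hΛ := h.hΛ
  obtain ⟨M1, hM1, hfar⟩ := h.exists_far (ε := 1 / 2) (by norm_num)
  set R : ℝ := M1 + |M| + 1 with hR
  have hR0 : 0 ≤ R := by positivity
  obtain ⟨η, hη, hprop⟩ := hopf_propagation (N + 1) (C := 2 + Λ) (r := 1) (R := R)
    (by linarith) one_pos hR0
  refine ⟨1 / 2 * η, by positivity, fun x hx => ?_⟩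
  set y : EuclideanSpace ℝ (Fin (N + 1)) := x + R • EuclideanSpace.single (Fin.last N) 1 with hy
  have hxy : ‖x - y‖ ≤ R := by
    simp [hy, norm_smul, abs_of_nonneg hR0]
  have hyN : y (Fin.last N) = x (Fin.last N) + R := by simp [hy]
  have hball (p : EuclideanSpace ℝ (Fin (N + 1))) (hp : ‖p - y‖ ≤ 1) :
      1 - 1 / 2 < u p ∧ v p < 1 / 2 := by
    refine (hfar p).1 ?_
    have h1 : |p (Fin.last N) - y (Fin.last N)| ≤ 1 := by
      have := PiLp.norm_apply_le (p - y) (Fin.last N)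
      simp only [PiLp.sub_apply, Real.norm_eq_abs] at this
      linarith
    have := (abs_le.1 h1).1
    have := le_abs_self M
    linarith
  have b1 := h.hu
  have b2 := h.u_le_one
  have b3 := h.hv
  have b4 := h.v_le_one
  constructor
  · refine hprop u (1 / 2) y h.contDiff_u b1 (fun p => ?_) (by norm_num)
      (fun p hp => by linarith [(hball p hp).1]) x hxy
    rw [h.lap_u]
    have e1 : v p ^ 2 ≤ 1 := pow_le_one₀ (b3 p) (b4 p)
    have e2 : u p ^ 2 ≤ 1 := pow_le_one₀ (b1 p) (b2 p)
    have e3 : u p ^ 3 ≤ u p := by nlinarith [b1 p]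
    have e4 : Λ * u p * v p ^ 2 ≤ Λ * u p * 1 := by have := b1 p; gcongr
    nlinarith [b1 p]
  · have hC : ContDiff ℝ 2 (fun p => 1 - v p) := contDiff_const.sub h.contDiff_v
    have := hprop (fun p => 1 - v p) (1 / 2) y hC (fun p => by linarith [b4 p]) (fun p => ?_)
      (by norm_num) (fun p hp => by linarith [(hball p hp).2]) x hxy
    · linarith
    rw [lap_sub contDiffAt_const h.contDiff_v.contDiffAt, lap_const, h.lap_v]
    have e1 : 0 ≤ Λ * u p ^ 2 * v p := by have := b3 p; positivity
    have e2 : 0 ≤ (1 - v p) * (2 - v p * (1 + v p)) := by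
      refine mul_nonneg (by linarith [b4 p]) ?_
      nlinarith [b3 p, b4 p]
    have e3 : 0 ≤ Λ * (1 - v p) := mul_nonneg (by linarith) (by linarith [b4 p])
    nlinarith

theorem exists_gap_below (h : Front N Λ u v) (M : ℝ) :
    ∃ κ : ℝ, 0 < κ ∧ ∀ x : EuclideanSpace ℝ (Fin (N + 1)), x (Fin.last N) ≤ M →
      κ ≤ v x ∧ u x ≤ 1 - κ := by
  obtain ⟨κ, hκ, hk⟩ := h.symm.exists_gap_above M
  exact ⟨κ, hκ, fun x hx => by simpa using hk (-x) (by simpa using hx)⟩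

/-- The shifted pair `(u(· + a), v(· + a))` is ordered with respect to `(u, v)`. -/
def Ordered (u v : EuclideanSpace ℝ (Fin (N + 1)) → ℝ) (a : EuclideanSpace ℝ (Fin (N + 1))) :
    Prop :=
  ∀ x, u x ≤ u (x + a) ∧ v (x + a) ≤ v x

theorem Ordered.symm {a : EuclideanSpace ℝ (Fin (N + 1))} (h : Ordered u v a) :
    Ordered (fun x => v (-x)) (fun x => u (-x)) a := by
  intro x
  have := h (-(x + a))
  rw [show -(x + a) + a = -x by abel] at this
  exact ⟨this.2, this.1⟩

theorem contDiff_shift {n : ℕ} {f : EuclideanSpace ℝ (Fin n) → ℝ} (hf : ContDiff ℝ 2 f)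
    (a : EuclideanSpace ℝ (Fin n)) : ContDiff ℝ 2 (fun x => f (x + a)) :=
  hf.comp (contDiff_id.add contDiff_const)

theorem lap_diff_u (h : Front N Λ u v) (a x : EuclideanSpace ℝ (Fin (N + 1))) :
    lap (N + 1) (fun x => u (x + a) - u x) x
      = (u (x + a) ^ 2 + u (x + a) * u x + u x ^ 2 - 1 + Λ * v (x + a) ^ 2) * (u (x + a) - u x)
        - Λ * u x * (v (x + a) + v x) * (v x - v (x + a)) := by
  rw [lap_sub (contDiff_shift h.contDiff_u a).contDiffAt h.contDiff_u.contDiffAt,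
    lap_translate h.contDiff_u, h.lap_u, h.lap_u]
  ring

theorem lap_diff_v (h : Front N Λ u v) (a x : EuclideanSpace ℝ (Fin (N + 1))) :
    lap (N + 1) (fun x => v x - v (x + a)) x
      = (v x ^ 2 + v x * v (x + a) + v (x + a) ^ 2 - 1 + Λ * u (x + a) ^ 2) * (v x - v (x + a))
        - Λ * v x * (u x + u (x + a)) * (u (x + a) - u x) := by
  rw [lap_sub h.contDiff_v.contDiffAt (contDiff_shift h.contDiff_v a).contDiffAt,
    lap_translate h.contDiff_v, h.lap_v, h.lap_v]
  ring

/-- If the diagonal coefficient is at least `c` and the coupling lies in `[0, c / 2]`, then the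
right-hand side of the difference equation is bounded as the maximum principle requires. -/
theorem coupled_le {A B c w z : ℝ} (hA : c ≤ A) (hB : 0 ≤ B) (hBc : B ≤ c / 2) (hw : w < 0) :
    A * w - B * z ≤ c * w + c / 2 * max 0 (-z) := by
  have h1 : B * (-z) ≤ B * max 0 (-z) := by gcongr; exact le_max_right _ _
  have h2 : B * max 0 (-z) ≤ c / 2 * max 0 (-z) := by gcongr
  nlinarith

/-- Comparison far away: the ordering only has to be checked for those `x` for which neither `x`
lies far up nor `x + a` lies far down. -/
theorem exists_comparison (h : Front N Λ u v) :
    ∃ M : ℝ, 0 < M ∧ ∀ a : EuclideanSpace ℝ (Fin (N + 1)), 0 ≤ a (Fin.last N) →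
      (∀ x : EuclideanSpace ℝ (Fin (N + 1)), x (Fin.last N) < M →
        -M < x (Fin.last N) + a (Fin.last N) → u x ≤ u (x + a) ∧ v (x + a) ≤ v x) →
      Ordered u v a := by
  have hΛ := h.hΛ
  set c : ℝ := min 1 ((Λ - 1) / 2) with hc
  have hc0 : 0 < c := lt_min one_pos (by linarith)
  have hc1 : c ≤ 1 := min_le_left _ _
  have hc2 : c ≤ (Λ - 1) / 2 := min_le_right _ _
  obtain ⟨ε, hε, hε1, hε2⟩ : ∃ ε : ℝ, 0 < ε ∧ ε ≤ 1 / 10 ∧ Λ * ε = c / 10 := by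
    refine ⟨c / 10 / Λ, by positivity, ?_, by field_simp⟩
    rw [div_le_iff₀ (by linarith)]
    nlinarith
  obtain ⟨M, hM, hfar⟩ := h.exists_far hε
  refine ⟨M, hM, fun a ha hstrip => ?_⟩
  have b1 := h.hu
  have b2 := h.u_le_one
  have b3 := h.hv
  have b4 := h.v_le_one
  -- diagonal coefficients near the two limit states
  have diag1 (p q s : ℝ) (hp : 1 - ε ≤ p) (hq : 1 - ε ≤ q) :
      c ≤ p ^ 2 + p * q + q ^ 2 - 1 + Λ * s ^ 2 := by
    have : 0 ≤ Λ * s ^ 2 := by positivity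
    nlinarith
  have diag2 (p q s : ℝ) (hp : 0 ≤ p) (hq : 0 ≤ q) (hs : 1 - ε ≤ s) :
      c ≤ p ^ 2 + p * q + q ^ 2 - 1 + Λ * s ^ 2 := by
    have h1 : 1 - 2 * ε ≤ s ^ 2 := by nlinarith
    have h2 : Λ * (1 - 2 * ε) ≤ Λ * s ^ 2 := by gcongr
    have h3 : 0 ≤ p ^ 2 + p * q + q ^ 2 := by positivity
    nlinarith
  have coup1 (p q s : ℝ) (hp0 : 0 ≤ p) (hp : p ≤ 1) (hq : q ≤ ε) (hs : s ≤ ε) :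
      Λ * p * (q + s) ≤ c / 2 := by
    have h1 : Λ * p * (q + s) ≤ Λ * p * (2 * ε) := by gcongr; linarith
    have h2 : Λ * p * (2 * ε) ≤ Λ * 1 * (2 * ε) := by gcongr
    linarith
  have coup2 (p q s : ℝ) (hp0 : 0 ≤ p) (hp : p ≤ ε) (hq : q ≤ 1) (hs : s ≤ 1) :
      Λ * p * (q + s) ≤ c / 2 := by
    have h1 : Λ * p * (q + s) ≤ Λ * p * 2 := by gcongr; linarith
    have h2 : Λ * p * 2 ≤ Λ * ε * 2 := by gcongr
    linarith
  have hwC : ContDiff ℝ 2 (fun x => u (x + a) - u x) :=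
    (contDiff_shift h.contDiff_u a).sub h.contDiff_u
  have hzC : ContDiff ℝ 2 (fun x => v x - v (x + a)) :=
    h.contDiff_v.sub (contDiff_shift h.contDiff_v a)
  have key := cooperative_max_principle hwC hzC hc0 (K := 1)
    (fun x => by linarith [b1 (x + a), b2 x]) (fun x => by linarith [b3 x, b4 (x + a)])
    (fun x hx => ?_) (fun x hx => ?_)
  · intro x
    exact ⟨by linarith [(key x).1], by linarith [(key x).2]⟩
  · rw [h.lap_diff_u]
    have hB : 0 ≤ Λ * u x * (v (x + a) + v x) := by
      have := b1 x; have := b3 x; have := b3 (x + a); positivity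
    by_cases hxM : M ≤ x (Fin.last N)
    · have f1 := (hfar x).1 hxM
      have f2 := (hfar (x + a)).1 (by simp; linarith)
      exact coupled_le (diag1 _ _ _ f2.1.le f1.1.le) hB (coup1 _ _ _ (b1 x) (b2 x) f2.2.le f1.2.le)
        hx
    by_cases hxM' : x (Fin.last N) + a (Fin.last N) ≤ -M
    · have f1 := (hfar x).2 (by linarith)
      have f2 := (hfar (x + a)).2 (by simpa using hxM')
      exact coupled_le (diag2 _ _ _ (b1 _) (b1 _) f2.2.le) hB (coup2 _ _ _ (b1 x) f1.1.le (b4 _)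
        (b4 _)) hx
    · exact absurd (hstrip x (by linarith) (by linarith)).1 (by linarith)
  · rw [h.lap_diff_v]
    have hB : 0 ≤ Λ * v x * (u x + u (x + a)) := by
      have := b3 x; have := b1 x; have := b1 (x + a); positivity
    by_cases hxM : M ≤ x (Fin.last N)
    · have f1 := (hfar x).1 hxM
      have f2 := (hfar (x + a)).1 (by simp; linarith)
      exact coupled_le (diag2 _ _ _ (b3 _) (b3 _) f2.1.le) hB
        (coup2 _ _ _ (b3 x) f1.2.le (b2 _) (b2 _)) hx
    by_cases hxM' : x (Fin.last N) + a (Fin.last N) ≤ -M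
    · have f1 := (hfar x).2 (by linarith)
      have f2 := (hfar (x + a)).2 (by simpa using hxM')
      exact coupled_le (diag1 _ _ _ f1.2.le f2.2.le) hB
        (coup1 _ _ _ (b3 x) (b4 x) f1.1.le f2.1.le) hx
    · exact absurd (hstrip x (by linarith) (by linarith)).2 (by linarith)

/-- Start of the sliding: large shifts are ordered. -/
theorem exists_ordered_of_large (h : Front N Λ u v) :
    ∃ T : ℝ, ∀ a : EuclideanSpace ℝ (Fin (N + 1)), T ≤ a (Fin.last N) → Ordered u v a := by
  obtain ⟨M, hM, hcomp⟩ := h.exists_comparison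
  obtain ⟨κ1, hκ1, hk1⟩ := h.exists_gap_above M
  obtain ⟨κ2, hκ2, hk2⟩ := h.exists_gap_below M
  obtain ⟨M', hM', hfar⟩ := h.exists_far (lt_min hκ1 hκ2)
  have hm1 := min_le_left κ1 κ2
  have hm2 := min_le_right κ1 κ2
  refine ⟨2 * M', fun a ha => hcomp a (by linarith) fun x hx1 hx2 => ?_⟩
  by_cases hx : x (Fin.last N) ≤ -M'
  · have f1 := (hfar x).2 hx
    have f2 := hk1 (x + a) (by simp; linarith)
    exact ⟨by linarith, by linarith⟩
  · have f1 := hk2 x hx1.le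
    have f2 := (hfar (x + a)).1 (by simp; linarith)
    exact ⟨by linarith, by linarith⟩

theorem lap_diff_u_le (h : Front N Λ u v) {a : EuclideanSpace ℝ (Fin (N + 1))}
    (ha : Ordered u v a) (x : EuclideanSpace ℝ (Fin (N + 1))) :
    lap (N + 1) (fun x => u (x + a) - u x) x ≤ (2 + Λ) * (u (x + a) - u x) := by
  have hΛ := h.hΛ
  rw [h.lap_diff_u]
  have b1 := h.hu x
  have b2 := h.hu (x + a)
  have b3 := h.hv x
  have b4 := h.hv (x + a)
  have c1 := h.u_le_one x
  have c2 := h.u_le_one (x + a)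
  have e1 : 0 ≤ Λ * u x * (v (x + a) + v x) * (v x - v (x + a)) :=
    mul_nonneg (by positivity) (by linarith [(ha x).2])
  have e2 : v (x + a) ^ 2 ≤ 1 := pow_le_one₀ b4 (h.v_le_one _)
  have e3 : Λ * v (x + a) ^ 2 ≤ Λ * 1 := by gcongr
  have e4 : u (x + a) ^ 2 + u (x + a) * u x + u x ^ 2 - 1 + Λ * v (x + a) ^ 2 ≤ 2 + Λ := by
    nlinarith
  have e5 := mul_le_mul_of_nonneg_right e4 (show 0 ≤ u (x + a) - u x by linarith [(ha x).1])
  linarith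

/-- Along the chain `x + k a` the function `u` has to climb from near `0` to near `1`, so one of
finitely many increments is bounded below; this propagates back to `x`. -/
theorem exists_pos_le_diff_u (h : Front N Λ u v) {a : EuclideanSpace ℝ (Fin (N + 1))}
    (ha : 0 < a (Fin.last N)) (hord : Ordered u v a) (K : ℝ) :
    ∃ c : ℝ, 0 < c ∧ ∀ x : EuclideanSpace ℝ (Fin (N + 1)), |x (Fin.last N)| ≤ K →
      c ≤ u (x + a) - u x := by
  have hΛ := h.hΛ
  obtain ⟨M, hM, hfar⟩ := h.exists_far (ε := 1 / 4) (by norm_num)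
  obtain ⟨L, hL, hLip⟩ := h.lipschitz_u
  obtain ⟨J, hJ⟩ := exists_nat_ge ((K + M) / a (Fin.last N) + 1)
  rcases lt_or_ge K 0 with hK | hK
  · exact ⟨1, one_pos, fun x hx => absurd (abs_nonneg (x (Fin.last N))) (by linarith)⟩
  have hJ1 : (1:ℝ) ≤ J := by
    have : 0 ≤ (K + M) / a (Fin.last N) := by positivity
    linarith
  have hJa : K + M ≤ J * a (Fin.last N) := by
    have : (K + M) / a (Fin.last N) ≤ J := by linarith
    rwa [div_le_iff₀ ha] at this
  set d : ℝ := 1 / (4 * J) with hd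
  have hd0 : 0 < d := by positivity
  set r : ℝ := d / (4 * L) with hr
  have hr0 : 0 < r := by positivity
  obtain ⟨η, hη, hprop⟩ := hopf_propagation (N + 1) (C := 2 + Λ) (r := r) (R := J * ‖a‖)
    (by linarith) hr0 (by positivity)
  refine ⟨d / 2 * η, by positivity, fun x hx => ?_⟩
  have hx' := abs_le.1 hx
  set y : EuclideanSpace ℝ (Fin (N + 1)) := x - (J : ℝ) • a with hy
  have hlow : u y < 1 / 4 := ((hfar y).2 (by simp [hy]; linarith)).1
  have hhigh : 3 / 4 < u (y + ((2 * J : ℕ) : ℝ) • a) := by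
    have := ((hfar (y + ((2 * J : ℕ) : ℝ) • a)).1 (by simp [hy]; linarith)).1
    linarith
  obtain ⟨k, hk, hkd⟩ : ∃ k : ℕ, k < 2 * J ∧
      d ≤ u (y + (k : ℝ) • a + a) - u (y + (k : ℝ) • a) := by
    by_contra! hcon
    have hind (k : ℕ) (hk : k ≤ 2 * J) : u (y + (k : ℝ) • a) ≤ u y + k * d := by
      induction k with
      | zero => simp
      | succ k ih =>
        have h1 := hcon k (by omega)
        have h2 := ih (by omega)
        have h3 : y + ((k + 1 : ℕ) : ℝ) • a = y + (k : ℝ) • a + a := by push_cast; module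
        rw [h3]; push_cast; linarith
    have h1 := hind (2 * J) le_rfl
    have h2 : ((2 * J : ℕ) : ℝ) * d = 1 / 2 := by rw [hd]; push_cast; field_simp; norm_num
    linarith
  set p : EuclideanSpace ℝ (Fin (N + 1)) := y + (k : ℝ) • a with hp
  have hxp : ‖x - p‖ ≤ J * ‖a‖ := by
    have : x - p = ((J : ℝ) - k) • a := by rw [hp, hy]; module
    rw [this, norm_smul]
    gcongr
    have hk' : (k : ℝ) ≤ 2 * J := by exact_mod_cast hk.le
    have hk0 : (0 : ℝ) ≤ k := by positivity
    rw [Real.norm_eq_abs, abs_le]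
    constructor <;> linarith
  refine hprop (fun x => u (x + a) - u x) (d / 2) p
    ((contDiff_shift h.contDiff_u a).sub h.contDiff_u) (fun q => by linarith [(hord q).1])
    (h.lap_diff_u_le hord) (by positivity) (fun q hq => ?_) x hxp
  have h1 := (abs_le.1 (hLip (q + a) (p + a))).1
  have h2 := (abs_le.1 (hLip q p)).2
  rw [show q + a - (p + a) = q - p by abel] at h1
  have h3 : L * ‖q - p‖ ≤ L * r := by gcongr
  have h4 : L * r = d / 4 := by rw [hr]; field_simp
  linarith

theorem exists_pos_le_diff_v (h : Front N Λ u v) {a : EuclideanSpace ℝ (Fin (N + 1))}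
    (ha : 0 < a (Fin.last N)) (hord : Ordered u v a) (K : ℝ) :
    ∃ c : ℝ, 0 < c ∧ ∀ x : EuclideanSpace ℝ (Fin (N + 1)), |x (Fin.last N)| ≤ K →
      c ≤ v x - v (x + a) := by
  obtain ⟨c, hc, hcx⟩ := h.symm.exists_pos_le_diff_u ha hord.symm (K + a (Fin.last N))
  refine ⟨c, hc, fun x hx => ?_⟩
  have := hcx (-(x + a)) (by
    have hx' := abs_le.1 hx
    simp only [PiLp.neg_apply, PiLp.add_apply, abs_neg]
    rw [abs_le]; constructor <;> linarith)
  simpa using this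

/-- The sliding argument: every shift with positive last coordinate is ordered. The ordered
multiples of `a` form a relatively clopen nonempty subset of `(0, ∞)`. -/
theorem ordered_of_pos (h : Front N Λ u v) {a : EuclideanSpace ℝ (Fin (N + 1))}
    (ha : 0 < a (Fin.last N)) {t : ℝ} (ht : 0 < t) : Ordered u v (t • a) := by
  set S : Set ℝ := {t | 0 < t ∧ Ordered u v (t • a)} with hS
  have hopen : IsOpen S := by
    rw [Metric.isOpen_iff]
    rintro t ⟨ht, hord⟩
    obtain ⟨M, hM, hcomp⟩ := h.exists_comparison
    obtain ⟨L1, hL1, hLip1⟩ := h.lipschitz_u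
    obtain ⟨L2, hL2, hLip2⟩ := h.lipschitz_v
    have hta : 0 < (t • a) (Fin.last N) := by simpa using mul_pos ht ha
    obtain ⟨c1, hc1, hw⟩ := h.exists_pos_le_diff_u hta hord (M + 2 * t * a (Fin.last N))
    obtain ⟨c2, hc2, hz⟩ := h.exists_pos_le_diff_v hta hord (M + 2 * t * a (Fin.last N))
    have hna : 0 < ‖a‖ := by
      rw [norm_pos_iff]; rintro rfl; simp at ha
    refine ⟨min t (min (c1 / (L1 * ‖a‖)) (c2 / (L2 * ‖a‖))), by positivity, fun s hs => ?_⟩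
    rw [Metric.mem_ball, Real.dist_eq, lt_min_iff, lt_min_iff] at hs
    obtain ⟨hs1, hs2, hs3⟩ := hs
    rw [lt_div_iff₀ (by positivity)] at hs2 hs3
    have hst := abs_lt.1 hs1
    have hs0 : 0 < s := by linarith
    refine ⟨hs0, hcomp _ (by simpa using (mul_pos hs0 ha).le) fun x hx1 hx2 => ?_⟩
    have hxK : |x (Fin.last N)| ≤ M + 2 * t * a (Fin.last N) := by
      simp only [PiLp.smul_apply, smul_eq_mul] at hx2
      have h1 : s * a (Fin.last N) ≤ 2 * t * a (Fin.last N) := by gcongr; linarith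
      have h2 : 0 < s * a (Fin.last N) := mul_pos hs0 ha
      rw [abs_le]; constructor <;> linarith
    have hdiff : ‖x + s • a - (x + t • a)‖ = |s - t| * ‖a‖ := by
      rw [show x + s • a - (x + t • a) = (s - t) • a by module, norm_smul, Real.norm_eq_abs]
    have e1 := (abs_le.1 (hLip1 (x + s • a) (x + t • a))).1
    have e2 := (abs_le.1 (hLip2 (x + s • a) (x + t • a))).2
    rw [hdiff] at e1 e2
    have e3 := hw x hxK
    have e4 := hz x hxK
    constructor <;> nlinarith
  have hsub : Set.Ioi (0:ℝ) ⊆ S := by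
    refine isPreconnected_Ioi.subset_of_closure_inter_subset hopen ?_ ?_
    · obtain ⟨T, hT⟩ := h.exists_ordered_of_large
      refine ⟨|T| / a (Fin.last N) + 1, ?_, ?_, hT _ ?_⟩
      · have : 0 ≤ |T| / a (Fin.last N) := by positivity
        simp only [Set.mem_Ioi]; linarith
      · positivity
      · have : |T| / a (Fin.last N) * a (Fin.last N) = |T| := by field_simp
        simp only [PiLp.smul_apply, smul_eq_mul]
        nlinarith [le_abs_self T]
    · rintro s ⟨hs, hs0⟩
      refine ⟨hs0, fun x => ?_⟩
      have hcl : IsClosed {s : ℝ | u x ≤ u (x + s • a) ∧ v (x + s • a) ≤ v x} := by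
        have hl : Continuous (fun s : ℝ => x + s • a) := by fun_prop
        exact (isClosed_le continuous_const (h.contDiff_u.continuous.comp hl)).inter
          (isClosed_le (h.contDiff_v.continuous.comp hl) continuous_const)
      exact closure_minimal (fun s hs => hs.2 x) hcl hs
  exact (hsub ht).2

/-- Applied to the difference quotients, the propagation of positivity shows that a directional
derivative which is positive somewhere is positive everywhere; no third derivatives are needed. -/
theorem fderiv_u_pos (h : Front N Λ u v) {a : EuclideanSpace ℝ (Fin (N + 1))}
    (ha : 0 < a (Fin.last N)) (x : EuclideanSpace ℝ (Fin (N + 1))) : 0 < fderiv ℝ u x a := by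
  have hΛ := h.hΛ
  have hdiff : Differentiable ℝ u := h.contDiff_u.differentiable (by norm_num)
  have hline (p : EuclideanSpace ℝ (Fin (N + 1))) (s : ℝ) :
      HasDerivAt (fun s : ℝ => u (p + s • a)) (fderiv ℝ u (p + s • a) a) s := by
    have h1 := ((hasDerivAt_id s).smul_const a).const_add p
    rw [one_smul] at h1
    exact (hdiff (p + s • a)).hasFDerivAt.comp_hasDerivAt s h1
  obtain ⟨y, hy⟩ : ∃ y, 0 < fderiv ℝ u y a := by
    by_contra! hcon
    obtain ⟨M, hM, hfar⟩ := h.exists_far (ε := 1 / 2) (by norm_num)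
    have hanti : Antitone (fun s : ℝ => u (0 + s • a)) :=
      antitone_of_deriv_nonpos (fun s => (hline 0 s).differentiableAt)
        (fun s => by rw [(hline 0 s).deriv]; exact hcon _)
    have hMa : M / a (Fin.last N) * a (Fin.last N) = M := by field_simp
    have h1 := ((hfar (0 + (M / a (Fin.last N)) • a)).1 (by simp [hMa])).1
    have h2 := ((hfar (0 + (-(M / a (Fin.last N))) • a)).2 (by simp [hMa])).1
    have h3 := hanti (show -(M / a (Fin.last N)) ≤ M / a (Fin.last N) by
      have : 0 < M / a (Fin.last N) := by positivity
      linarith)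
    simp only at h3
    linarith
  set m : ℝ := fderiv ℝ u y a / 2 with hm
  have hm0 : 0 < m := by positivity
  have hcont : Continuous (fun p => fderiv ℝ u p a) :=
    (h.contDiff_u.continuous_fderiv (by norm_num)).clm_apply continuous_const
  obtain ⟨ρ, hρ, hball⟩ := Metric.eventually_nhds_iff.1
    (hcont.continuousAt.eventually (lt_mem_nhds (show m < fderiv ℝ u y a by linarith)))
  obtain ⟨η, hη, hprop⟩ := hopf_propagation (N + 1) (C := 2 + Λ) (r := ρ / 2) (R := ‖x - y‖)
    (by linarith) (by positivity) (norm_nonneg _)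
  have hna : 0 < ‖a‖ := by
    rw [norm_pos_iff]; rintro rfl; simp at ha
  have hquot : ∀ t ∈ Set.Ioo 0 (ρ / 2 / ‖a‖), m * η ≤ t⁻¹ • (u (x + (0 + t) • a)
      - u (x + (0:ℝ) • a)) := by
    intro t ht
    have hord := h.ordered_of_pos ha ht.1
    have hta : t * ‖a‖ < ρ / 2 := by
      have := ht.2; rwa [lt_div_iff₀ hna] at this
    have h1 := hprop (fun x => u (x + t • a) - u x) (m * t) y
      ((contDiff_shift h.contDiff_u (t • a)).sub h.contDiff_u)
      (fun q => by linarith [(hord q).1]) (h.lap_diff_u_le hord) (mul_pos hm0 ht.1)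
      (fun q hq => ?_) x le_rfl
    · simp only [zero_add, zero_smul, add_zero, smul_eq_mul]
      rw [le_inv_mul_iff₀ ht.1]
      linarith
    obtain ⟨s, hs, hseq⟩ := exists_hasDerivAt_eq_slope (fun s : ℝ => u (q + s • a))
      (fun s => fderiv ℝ u (q + s • a) a) ht.1
      (fun s _ => (hline q s).continuousAt.continuousWithinAt) (fun s _ => hline q s)
    have hsm : m < fderiv ℝ u (q + s • a) a := by
      apply hball
      rw [dist_eq_norm, show q + s • a - y = (q - y) + s • a by abel]
      refine (norm_add_le _ _).trans_lt ?_
      rw [norm_smul, Real.norm_eq_abs, abs_of_pos hs.1]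
      have : s * ‖a‖ ≤ t * ‖a‖ := by gcongr; exact hs.2.le
      linarith
    rw [hseq, sub_zero, lt_div_iff₀ ht.1] at hsm
    simp only [zero_smul, add_zero] at hsm
    linarith
  have hlim := (hline x 0).tendsto_slope_zero_right
  have hge : m * η ≤ fderiv ℝ u (x + (0:ℝ) • a) a :=
    ge_of_tendsto hlim (by
      filter_upwards [Ioo_mem_nhdsGT (show (0:ℝ) < ρ / 2 / ‖a‖ by positivity)] with t ht
      exact hquot t ht)
  rw [zero_smul, add_zero] at hge
  exact lt_of_lt_of_le (by positivity) hge

theorem fderiv_v_neg (h : Front N Λ u v) {a : EuclideanSpace ℝ (Fin (N + 1))}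
    (ha : 0 < a (Fin.last N)) (x : EuclideanSpace ℝ (Fin (N + 1))) : fderiv ℝ v x a < 0 := by
  have h1 := h.symm.fderiv_u_pos ha (-x)
  have hd : HasFDerivAt (fun x => v (-x)) ((fderiv ℝ v (- -x)).comp
      (-ContinuousLinearMap.id ℝ (EuclideanSpace ℝ (Fin (N + 1))))) (-x) :=
    (h.contDiff_v.differentiable (by norm_num) (- -x)).hasFDerivAt.comp (-x)
      (hasFDerivAt_id (-x)).neg
  rw [hd.fderiv] at h1
  simpa using h1

end Front

/-- Lemma 4.3: `u` is strictly increasing and `v` strictly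
decreasing with respect to all unit vectors in an open neighborhood of `e_N`
in the unit sphere. -/
theorem stmt_17 (N : ℕ) (Λ : ℝ) (hΛ : 1 < Λ)
    (u v : EuclideanSpace ℝ (Fin (N + 1)) → ℝ)
    (hsol : IsSolution (N + 1) Λ u v)
    (hu : ∀ x, 0 ≤ u x) (hv : ∀ x, 0 ≤ v x)
    (hinf : Hinf N u v) :
    ∃ δ : ℝ, 0 < δ ∧
      ∀ ν : EuclideanSpace ℝ (Fin (N + 1)), ‖ν‖ = 1 →
        ‖ν - EuclideanSpace.single (Fin.last N) 1‖ < δ →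
        ∀ x, 0 < fderiv ℝ u x ν ∧ fderiv ℝ v x ν < 0 := by
  have h : Front N Λ u v := ⟨hΛ, hsol, hu, hv, hinf⟩
  refine ⟨1, one_pos, fun ν _ hν x => ?_⟩
  -- `|ν - e_N| < 1` forces the last coordinate of `ν` to be positive
  have hpos : 0 < ν (Fin.last N) := by
    have h1 := PiLp.norm_apply_le (ν - EuclideanSpace.single (Fin.last N) 1) (Fin.last N)
    simp only [PiLp.sub_apply, Real.norm_eq_abs, PiLp.single_apply, if_true] at h1
    linarith [(abs_lt.1 (h1.trans_lt hν)).1]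
  exact ⟨h.fderiv_u_pos hpos x, h.fderiv_v_neg hpos x⟩
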